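/- Let u : ℕ → Bool be not eventually periodic. Then for every n : ℕ, the complexity satisfies p(u, n) ≥ n + 1, where p(u, n) = Set.ncard {w : Fin n → Bool | ∃ k, ∀ i, w i = u (k + i)}. -/

import Mathlib

/-!
Deleting the last letter maps the words of length `n + 1` occurring in `u` onto those of length `n`.
If this map is injective and there are finitely many such words, each window of length `n`
determines the next one, while two windows at different positions coincide. From these positions on
`u` repeats itself. Hence the complexity of a sequence that is not eventually periodic strictly
increases as long as it is finite, starting from the single empty word.
-/

section FactorComplexity

variable {α : Type*}

/-- The sequence `u` is eventually periodic: from some index `N` on, it has a period `T > 0`. -/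
def EventuallyPeriodic (u : ℕ → α) : Prop :=
  ∃ N T : ℕ, 0 < T ∧ ∀ n : ℕ, N ≤ n → u (n + T) = u n

/-- The word of length `n` occurring in the sequence `u` at position `k`. -/
def window (u : ℕ → α) (n k : ℕ) : Fin n → α :=
  fun i => u (k + i)

/-- The factors of length `n` of the sequence `u`, i.e. the words of length `n` occurring in it. -/
def factorSet (u : ℕ → α) (n : ℕ) : Set (Fin n → α) :=
  {w | ∃ k : ℕ, ∀ i : Fin n, w i = u (k + i)}

/-- The complexity function `p(u, n)`, the number of factors of length `n` of `u`. It takes values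
in `ℕ∞` because the alphabet may be infinite. -/
noncomputable def factorComplexity (u : ℕ → α) (n : ℕ) : ℕ∞ :=
  (factorSet u n).encard

theorem eventuallyPeriodic_of_forall_add_eq {u : ℕ → α} {k l : ℕ} (hkl : k < l)
    (h : ∀ j, u (k + j) = u (l + j)) : EventuallyPeriodic u := by
  refine ⟨k, l - k, Nat.sub_pos_of_lt hkl, fun m hm => ?_⟩
  calc u (m + (l - k)) = u (l + (m - k)) := by congr 1; omega
    _ = u (k + (m - k)) := (h (m - k)).symm
    _ = u m := by rw [Nat.add_sub_cancel' hm]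

theorem init_window (u : ℕ → α) (n k : ℕ) : Fin.init (window u (n + 1) k) = window u n k :=
  rfl

theorem tail_window (u : ℕ → α) (n k : ℕ) :
    Fin.tail (window u (n + 1) k) = window u n (k + 1) := by
  funext i
  simp only [Fin.tail, window, Fin.val_succ, add_assoc, add_comm 1]

theorem window_mem_factorSet (u : ℕ → α) (n k : ℕ) : window u n k ∈ factorSet u n :=
  ⟨k, fun _ => rfl⟩

theorem factorSet_eq_range_window (u : ℕ → α) (n : ℕ) :
    factorSet u n = Set.range (window u n) := by
  ext w
  simp only [factorSet, Set.mem_ofPred_eq, Set.mem_range, funext_iff, window, eq_comm]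

theorem image_init_factorSet (u : ℕ → α) (n : ℕ) :
    (fun w : Fin (n + 1) → α => (Fin.init w : Fin n → α)) '' factorSet u (n + 1) =
      factorSet u n := by
  simp only [factorSet_eq_range_window, ← Set.range_comp, Function.comp_def, init_window]

theorem window_add_eq_of_forall_window_succ_eq {u : ℕ → α} {n : ℕ}
    (hext : ∀ k l, window u n k = window u n l → window u (n + 1) k = window u (n + 1) l)
    {k l : ℕ} (h : window u n k = window u n l) (j : ℕ) :
    window u n (k + j) = window u n (l + j) := by
  induction j with
  | zero => exact h
  | succ j ih =>
    simpa only [tail_window, add_assoc] using congrArg Fin.tail (hext (k + j) (l + j) ih)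

theorem eventuallyPeriodic_of_forall_window_succ_eq {u : ℕ → α} {n : ℕ}
    (hext : ∀ k l, window u n k = window u n l → window u (n + 1) k = window u (n + 1) l)
    (hfin : (factorSet u n).Finite) : EventuallyPeriodic u := by
  obtain ⟨k, l, hkl, hwindow⟩ :=
    hfin.exists_lt_map_eq_of_forall_mem (window_mem_factorSet u n)
  refine eventuallyPeriodic_of_forall_add_eq hkl fun j => ?_
  have hadd : window u n (k + j) = window u n (l + j) :=
    window_add_eq_of_forall_window_succ_eq hext hwindow j
  exact congrFun (hext (k + j) (l + j) hadd) 0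

theorem eventuallyPeriodic_of_factorComplexity_succ_eq {u : ℕ → α} {n : ℕ}
    (hfin : (factorSet u (n + 1)).Finite)
    (heq : factorComplexity u (n + 1) = factorComplexity u n) : EventuallyPeriodic u := by
  have hinj : Set.InjOn (fun w : Fin (n + 1) → α => (Fin.init w : Fin n → α))
      (factorSet u (n + 1)) := by
    apply hfin.injOn_of_encard_image_eq
    rw [image_init_factorSet]
    exact heq.symm
  have hfin' : (factorSet u n).Finite := image_init_factorSet u n ▸ hfin.image _
  exact eventuallyPeriodic_of_forall_window_succ_eq
    (fun k l => hinj (window_mem_factorSet u _ k) (window_mem_factorSet u _ l)) hfin'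

theorem factorComplexity_zero (u : ℕ → α) : factorComplexity u 0 = 1 := by
  rw [factorComplexity, Set.encard_eq_one]
  exact ⟨window u 0 0, Set.eq_singleton_iff_unique_mem.2
    ⟨window_mem_factorSet u 0 0, fun _ _ => Subsingleton.elim _ _⟩⟩

theorem factorComplexity_le_succ (u : ℕ → α) (n : ℕ) :
    factorComplexity u n ≤ factorComplexity u (n + 1) := by
  rw [factorComplexity, ← image_init_factorSet]
  exact Set.encard_image_le _ _

theorem factorComplexity_add_one_le_succ {u : ℕ → α} (hnp : ¬ EventuallyPeriodic u) (n : ℕ) :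
    factorComplexity u n + 1 ≤ factorComplexity u (n + 1) := by
  rcases (factorSet u (n + 1)).finite_or_infinite with hfin | hinf
  · have hne : factorComplexity u n ≠ factorComplexity u (n + 1) := fun heq =>
      hnp (eventuallyPeriodic_of_factorComplexity_succ_eq hfin heq.symm)
    exact Order.add_one_le_of_lt ((factorComplexity_le_succ u n).lt_of_ne hne)
  · rw [factorComplexity.eq_def u (n + 1), hinf.encard_eq]
    exact le_top

theorem not_eventually_periodic_complexity_ge_general {u : ℕ → α} (hnp : ¬ EventuallyPeriodic u)
    (n : ℕ) : (n + 1 : ℕ∞) ≤ factorComplexity u n := by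
  induction n with
  | zero => simp only [factorComplexity_zero, Nat.cast_zero, zero_add, le_refl]
  | succ n ih =>
    calc ((n + 1 : ℕ) + 1 : ℕ∞) ≤ factorComplexity u n + 1 := by
          rw [Nat.cast_add_one]
          gcongr
      _ ≤ factorComplexity u (n + 1) := factorComplexity_add_one_le_succ hnp n

end FactorComplexity

theorem not_eventually_periodic_complexity_ge (u : ℕ → Bool)
    (hnp : ¬ ∃ (N : ℕ) (T : ℕ), 0 < T ∧ ∀ n : ℕ, N ≤ n → u (n + T) = u n) :
    ∀ n : ℕ,
      n + 1 ≤ Set.ncard {w : Fin n → Bool | ∃ k : ℕ, ∀ i : Fin n, w i = u (k + i)} := by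
  intro n
  have hcard : (factorSet u n).ncard = factorComplexity u n := (Set.toFinite _).cast_ncard_eq
  exact_mod_cast hcard ▸ not_eventually_periodic_complexity_ge_general hnp n
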